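/- arXiv:2109.07803 — 2 statements merged into one kernel-verified Lean document; each statement's English description precedes it below -/
import Mathlib

section
/- Fix n : ℕ and 0 ≤ k ≤ n. Let N be the number of model structures on the category [n] whose homotopy category — the localization of [n] at the class of weak equivalences — is equivalent, as a category, to the poset category [k]. Then (n + k + 2) · N = 2(k + 1) · C(2n+1, n−k). -/
universe v u

open CategoryTheory

section ModelDefs

variable {C : Type u} [Category.{v} C]

/-- `f` is a retract of `g` in the arrow category of `C`. -/
def IsRetractOfHom {X Y X' Y' : C} (f : X ⟶ Y) (g : X' ⟶ Y') : Prop :=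
  ∃ (a : X ⟶ X') (b : Y ⟶ Y') (a' : X' ⟶ X) (b' : Y' ⟶ Y),
    a ≫ a' = 𝟙 X ∧ b ≫ b' = 𝟙 Y ∧ f ≫ b = a ≫ g ∧ g ≫ b' = a' ≫ f

/-- A class of morphisms is stable under retracts (in the arrow category). -/
def StableUnderRetractsHom (P : MorphismProperty C) : Prop :=
  ∀ ⦃X Y X' Y' : C⦄ (f : X ⟶ Y) (g : X' ⟶ Y'), IsRetractOfHom f g → P g → P f

/-- A (Quillen) model structure on a category `C`: three classes of morphisms —
weak equivalences, fibrations, cofibrations — each closed under composition and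
retracts, the weak equivalences satisfying two-out-of-three, cofibrations
(resp. acyclic cofibrations) having the left lifting property against acyclic
fibrations (resp. fibrations), and every morphism factoring as a cofibration
followed by an acyclic fibration and as an acyclic cofibration followed by a
fibration. A model category is a category with all finite limits and colimits
equipped with such a structure. -/
structure ModelStructure (C : Type u) [Category.{v} C] where
  weq : MorphismProperty C
  fib : MorphismProperty C
  cof : MorphismProperty C
  weq_comp : weq.IsStableUnderComposition
  fib_comp : fib.IsStableUnderComposition
  cof_comp : cof.IsStableUnderComposition
  weq_retract : StableUnderRetractsHom weq
  fib_retract : StableUnderRetractsHom fib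
  cof_retract : StableUnderRetractsHom cof
  weq_two_out_of_three : weq.HasTwoOutOfThreeProperty
  lift_cof_trivFib : ∀ ⦃A B X Y : C⦄ (i : A ⟶ B) (p : X ⟶ Y),
    cof i → fib p → weq p → HasLiftingProperty i p
  lift_trivCof_fib : ∀ ⦃A B X Y : C⦄ (i : A ⟶ B) (p : X ⟶ Y),
    cof i → weq i → fib p → HasLiftingProperty i p
  factor_cof_trivFib : ∀ ⦃X Y : C⦄ (f : X ⟶ Y),
    ∃ (Z : C) (i : X ⟶ Z) (p : Z ⟶ Y), cof i ∧ fib p ∧ weq p ∧ i ≫ p = f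
  factor_trivCof_fib : ∀ ⦃X Y : C⦄ (f : X ⟶ Y),
    ∃ (Z : C) (i : X ⟶ Z) (p : Z ⟶ Y), cof i ∧ weq i ∧ fib p ∧ i ≫ p = f

end ModelDefs

namespace BinaryTree

/-- Label the nodes of `t` in preorder by consecutive natural numbers starting at `o`. Then
`t.leftEnd o a` is the largest label in the left subtree of the node `a`, or `a` itself if that
subtree is empty. -/
def leftEnd : BinaryTree Unit → ℕ → ℕ → ℕ
  | nil, _, a => a
  | node _ l r, o, a =>
    if a = o then o + l.numNodes
    else if a ≤ o + l.numNodes then l.leftEnd (o + 1) a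
    else r.leftEnd (o + 1 + l.numNodes) a

theorem leftEnd_mem (t : BinaryTree Unit) {o a : ℕ} (h : o ≤ a) (h' : a < o + t.numNodes) :
    a ≤ t.leftEnd o a ∧ t.leftEnd o a < o + t.numNodes := by
  induction t generalizing o a with
  | nil => simp [numNodes] at h'; omega
  | node _ l r ihl ihr =>
    simp only [numNodes, leftEnd] at *
    have hl := @ihl (o + 1) a
    have hr := @ihr (o + 1 + l.numNodes) a
    grind

theorem leftEnd_nested (t : BinaryTree Unit) {o a c : ℕ} (h : o ≤ a) (h' : a < o + t.numNodes)
    (hac : a ≤ c) (hca : c ≤ t.leftEnd o a) : t.leftEnd o c ≤ t.leftEnd o a := by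
  induction t generalizing o a c with
  | nil => simp [numNodes] at h'; omega
  | node _ l r ihl ihr =>
    simp only [numNodes, leftEnd] at *
    have hl := @ihl (o + 1) a c
    have hr := @ihr (o + 1 + l.numNodes) a c
    have hl' := @leftEnd_mem l (o + 1) c
    have hr' := @leftEnd_mem l (o + 1) a
    grind

theorem exists_leftEnd_eq (m o : ℕ) (f : ℕ → ℕ)
    (hf : ∀ a, o ≤ a → a < o + m → a ≤ f a ∧ f a < o + m)
    (hn : ∀ a c, o ≤ a → a < o + m → a ≤ c → c ≤ f a → f c ≤ f a) :
    ∃ t : BinaryTree Unit, t.numNodes = m ∧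
      ∀ a, o ≤ a → a < o + m → t.leftEnd o a = f a := by
  induction m using Nat.strong_induction_on generalizing o with
  | _ m ih =>
    obtain rfl | hm := Nat.eq_zero_or_pos m
    · exact ⟨nil, rfl, fun a _ _ => by omega⟩
    have ho := hf o le_rfl (by omega)
    obtain ⟨l, hl, hl'⟩ := ih (f o - o) (by omega) (o + 1)
      (fun a h h' => ⟨(hf a (by omega) (by omega)).1, by
        have := hn o a le_rfl (by omega) (by omega) (by omega); omega⟩)
      (fun a c h h' => hn a c (by omega) (by omega))
    obtain ⟨r, hr, hr'⟩ := ih (m - 1 - (f o - o)) (by omega) (o + 1 + (f o - o))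
      (fun a h h' => by have := hf a (by omega) (by omega); omega)
      (fun a c h h' => hn a c (by omega) (by omega))
    refine ⟨node () l r, by simp only [numNodes]; omega, fun a h h' => ?_⟩
    simp only [leftEnd, hl]
    split_ifs with h₁ h₂
    · subst h₁; omega
    · exact hl' a (by omega) (by omega)
    · exact hr' a (by omega) (by omega)

theorem eq_of_leftEnd_eq {t t' : BinaryTree Unit} {o : ℕ} (h : t.numNodes = t'.numNodes)
    (h' : ∀ a, o ≤ a → a < o + t.numNodes → t.leftEnd o a = t'.leftEnd o a) : t = t' := by
  induction t generalizing t' o with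
  | nil => cases t' with
    | nil => rfl
    | node => simp [numNodes] at h
  | node _ l r ihl ihr => cases t' with
    | nil => simp [numNodes] at h
    | node _ l' r' =>
      simp only [numNodes] at h h'
      have hl : l.numNodes = l'.numNodes := by
        simpa [leftEnd] using h' o le_rfl (by omega)
      congr 1
      · refine ihl hl (o := o + 1) fun a h₁ h₂ => ?_
        have := h' a (by omega) (by omega)
        simp only [leftEnd] at this
        grind
      · refine ihr (by omega) (o := o + 1 + l.numNodes) fun a h₁ h₂ => ?_
        have := h' a (by omega) (by omega)
        simp only [leftEnd] at this
        grind

/-- The total number of nodes of a list of trees. -/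
def forestSize (L : List (BinaryTree Unit)) : ℕ := (L.map numNodes).sum

@[simp]
theorem forestSize_nil : forestSize [] = 0 := rfl

@[simp]
theorem forestSize_cons (t : BinaryTree Unit) (L : List (BinaryTree Unit)) :
    forestSize (t :: L) = t.numNodes + forestSize L := by
  simp [forestSize]

/-- The analogue of `leftEnd` for a list of trees labelled one after the other. -/
def forestLeftEnd : List (BinaryTree Unit) → ℕ → ℕ → ℕ
  | [], _, a => a
  | t :: L, o, a =>
    if a < o + t.numNodes then t.leftEnd o a else forestLeftEnd L (o + t.numNodes) a

/-- The largest label of the tree containing the label `a`, in a list of trees labelled one after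
the other starting at `o`. -/
def blockEnd : List (BinaryTree Unit) → ℕ → ℕ → ℕ
  | [], _, a => a
  | t :: L, o, a =>
    if a < o + t.numNodes then o + t.numNodes - 1 else blockEnd L (o + t.numNodes) a

theorem forestLeftEnd_mem (L : List (BinaryTree Unit)) {o a : ℕ} (h : o ≤ a)
    (h' : a < o + forestSize L) :
    a ≤ forestLeftEnd L o a ∧ forestLeftEnd L o a ≤ blockEnd L o a ∧
      blockEnd L o a < o + forestSize L := by
  induction L generalizing o with
  | nil => simp at h'; omega
  | cons t L ih =>
    simp only [forestSize_cons, forestLeftEnd, blockEnd] at *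
    have h₁ := @ih (o + t.numNodes)
    have h₂ := @leftEnd_mem t o a
    grind

theorem blockEnd_eq (L : List (BinaryTree Unit)) {o a c : ℕ} (h : o ≤ a)
    (h' : a < o + forestSize L) (hac : a ≤ c) (hca : c ≤ blockEnd L o a) :
    blockEnd L o c = blockEnd L o a := by
  induction L generalizing o with
  | nil => simp at h'; omega
  | cons t L ih =>
    simp only [forestSize_cons, blockEnd] at *
    have h₁ := @ih (o + t.numNodes)
    grind

theorem forestLeftEnd_nested (L : List (BinaryTree Unit)) {o a c : ℕ} (h : o ≤ a)
    (h' : a < o + forestSize L) (hac : a ≤ c) (hca : c ≤ forestLeftEnd L o a) :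
    forestLeftEnd L o c ≤ forestLeftEnd L o a := by
  induction L generalizing o with
  | nil => simp at h'; omega
  | cons t L ih =>
    simp only [forestSize_cons, forestLeftEnd] at *
    have h₁ := @ih (o + t.numNodes)
    have h₂ := @leftEnd_nested t o a c
    have h₃ := @leftEnd_mem t o a
    grind

theorem card_blockEnd_fixed {L : List (BinaryTree Unit)} (hL : ∀ t ∈ L, t ≠ nil) (o : ℕ) :
    ((Finset.Ico o (o + forestSize L)).filter fun a => blockEnd L o a = a).card = L.length := by
  induction L generalizing o with
  | nil => simp
  | cons t L ih =>
    have ht : 0 < t.numNodes := by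
      cases t with
      | nil => simp at hL
      | node => simp [numNodes]
    have hins : ((Finset.Ico o (o + forestSize (t :: L))).filter
        fun a => blockEnd (t :: L) o a = a) =
        insert (o + t.numNodes - 1) ((Finset.Ico (o + t.numNodes)
          (o + t.numNodes + forestSize L)).filter
            fun a => blockEnd L (o + t.numNodes) a = a) := by
      ext a
      simp only [Finset.mem_filter, Finset.mem_Ico, Finset.mem_insert, forestSize_cons, blockEnd]
      split_ifs <;> grind
    rw [hins, Finset.card_insert_of_notMem (by simp; omega),
      ih fun t ht => hL t (List.mem_cons_of_mem _ ht), List.length_cons]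

theorem exists_forest_eq (m o : ℕ) (f g : ℕ → ℕ)
    (hf : ∀ a, o ≤ a → a < o + m → a ≤ f a ∧ f a ≤ g a ∧ g a < o + m)
    (hn : ∀ a c, o ≤ a → a < o + m → a ≤ c → c ≤ f a → f c ≤ f a)
    (hg : ∀ a c, o ≤ a → a < o + m → a ≤ c → c ≤ g a → g c = g a) :
    ∃ L : List (BinaryTree Unit), (∀ t ∈ L, t ≠ nil) ∧ forestSize L = m ∧
      ∀ a, o ≤ a → a < o + m → forestLeftEnd L o a = f a ∧ blockEnd L o a = g a := by
  induction m using Nat.strong_induction_on generalizing o with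
  | _ m ih =>
    obtain rfl | hm := Nat.eq_zero_or_pos m
    · exact ⟨[], by simp, rfl, fun a _ _ => by omega⟩
    have ho := hf o le_rfl (by omega)
    have hgo : ∀ a, o ≤ a → a ≤ g o → g a = g o := fun a h h' => hg o a le_rfl (by omega) h h'
    obtain ⟨t, ht, ht'⟩ := exists_leftEnd_eq (g o + 1 - o) o f
      (fun a h h' => by
        have h₁ := hf a h (by omega)
        have h₂ := hgo a h (by omega)
        omega)
      (fun a c h h' => hn a c h (by omega))
    obtain ⟨L, hL, hsize, hL'⟩ := ih (m - (g o + 1 - o)) (by omega) (g o + 1)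
      (fun a h h' => by have := hf a (by omega) (by omega); omega)
      (fun a c h h' => hn a c (by omega) (by omega))
      (fun a c h h' => hg a c (by omega) (by omega))
    have hoff : o + t.numNodes = g o + 1 := by omega
    refine ⟨t :: L, ?_, by simp only [forestSize_cons]; omega, fun a h h' => ?_⟩
    · rintro s hs rfl
      rcases List.mem_cons.1 hs with rfl | hs
      · simp [numNodes] at ht; omega
      · exact hL _ hs rfl
    · simp only [forestLeftEnd, blockEnd, hoff]
      split_ifs with h₁
      · exact ⟨ht' a h (by omega), (hgo a h (by omega)).symm⟩
      · exact hL' a (by omega) (by omega)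

theorem forest_ext {L L' : List (BinaryTree Unit)} {o : ℕ} (hL : ∀ t ∈ L, t ≠ nil)
    (hL' : ∀ t ∈ L', t ≠ nil) (h : forestSize L = forestSize L')
    (h' : ∀ a, o ≤ a → a < o + forestSize L →
      forestLeftEnd L o a = forestLeftEnd L' o a ∧ blockEnd L o a = blockEnd L' o a) :
    L = L' := by
  have pos : ∀ t : BinaryTree Unit, t ≠ nil → 0 < t.numNodes := by
    rintro (_ | _) ht
    · exact absurd rfl ht
    · simp [numNodes]
  induction L generalizing L' o with
  | nil => cases L' with
    | nil => rfl
    | cons t L' => have := pos t (hL' t (by simp)); simp at h; omega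
  | cons t L ih =>
    have ht := pos t (hL t (by simp))
    cases L' with
    | nil => simp at h; omega
    | cons t' L' =>
      have ht' := pos t' (hL' t' (by simp))
      simp only [forestSize_cons, forestLeftEnd, blockEnd] at h h'
      have hsize : t.numNodes = t'.numNodes := by
        have := (h' o le_rfl (by omega)).2
        rw [if_pos (by omega), if_pos (by omega)] at this
        omega
      congr 1
      · refine eq_of_leftEnd_eq (o := o) hsize fun a h₁ h₂ => ?_
        have := (h' a h₁ (by omega)).1
        rwa [if_pos (by omega), if_pos (by omega)] at this
      · refine ih (o := o + t.numNodes) (fun s hs => hL s (by simp [hs]))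
          (fun s hs => hL' s (by simp [hs])) (by omega) fun a h₁ h₂ => ?_
        have := h' a (by omega) (by omega)
        rw [if_neg (by omega), if_neg (by omega), if_neg (by omega), if_neg (by omega),
          ← hsize] at this
        exact this

/-- The lists of `j` nonempty trees with `m` nodes in total. -/
def forests : ℕ → ℕ → Finset (List (BinaryTree Unit))
  | 0, m => if m = 0 then {[]} else ∅
  | j + 1, m => (Finset.HasAntidiagonal.antidiagonal m).biUnion fun p =>
      (((treesOfNumNodesEq p.1).erase nil) ×ˢ forests j p.2).image fun x => x.1 :: x.2

theorem mem_forests {j m : ℕ} {L : List (BinaryTree Unit)} :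
    L ∈ forests j m ↔ (∀ t ∈ L, t ≠ nil) ∧ L.length = j ∧ forestSize L = m := by
  induction j generalizing m L with
  | zero =>
    rw [forests]
    cases L <;> split_ifs <;> simp_all [eq_comm]
  | succ j ih =>
    simp only [forests, Finset.mem_biUnion, Finset.mem_image, Finset.mem_product, ih,
      Finset.mem_erase, mem_treesOfNumNodesEq, Finset.HasAntidiagonal.mem_antidiagonal, Prod.exists]
    constructor
    · rintro ⟨a, b, rfl, t, L, ⟨⟨ht, rfl⟩, hL, rfl, rfl⟩, rfl⟩
      simpa [ht] using hL
    · rintro ⟨hL, hlen, rfl⟩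
      cases L with
      | nil => simp at hlen
      | cons t L =>
        refine ⟨_, _, (forestSize_cons t L).symm, t, L, ⟨⟨hL t (by simp), rfl⟩,
          fun s hs => hL s (by simp [hs]), by simpa using hlen, rfl⟩, rfl⟩

open PowerSeries in
theorem card_forests (j m : ℕ) :
    (forests j m).card = coeff m ((X * catalanSeries ^ 2) ^ j) := by
  induction j generalizing m with
  | zero => rw [forests]; simp only [pow_zero, coeff_one]; split_ifs <;> rfl
  | succ j ih =>
    rw [forests, Finset.card_biUnion, pow_succ', coeff_mul]
    · refine Finset.sum_congr rfl fun p _ => ?_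
      rw [Finset.card_image_of_injective _ (by rintro ⟨a, b⟩ ⟨c, d⟩ h; simpa using h),
        Finset.card_product, ih]
      congr 1
      have h := congrArg (coeff p.1) catalanSeries_sq_mul_X_add_one
      rw [map_add, catalanSeries_coeff, mul_comm, coeff_one,
        ← treesOfNumNodesEq_card_eq_catalan] at h
      rw [Finset.card_erase_eq_ite, ← h]
      simp only [mem_treesOfNumNodesEq, numNodes]
      split_ifs <;> omega
    · intro p _ q _ hpq
      simp only [Function.onFun, Finset.disjoint_left, Finset.mem_image, Finset.mem_product,
        Finset.mem_erase, mem_treesOfNumNodesEq, mem_forests]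
      rintro _ ⟨⟨t, L⟩, ⟨⟨_, h₁⟩, _, _, h₂⟩, rfl⟩ ⟨⟨t', L'⟩, ⟨⟨_, h₃⟩, _, _, h₄⟩, h⟩
      simp only [List.cons.injEq] at h
      obtain ⟨rfl, rfl⟩ := h
      exact hpq (Prod.ext (h₁.symm.trans h₃) (h₂.symm.trans h₄))

open PowerSeries in
theorem card_forests_succ_succ (j m : ℕ) :
    (forests (j + 1) (m + 1)).card =
      (forests j m).card + 2 * (forests (j + 1) m).card + (forests (j + 2) m).card := by
  simp only [card_forests]
  set D : PowerSeries ℕ := X * catalanSeries ^ 2 with hD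
  have h : D = X * (D + 1) ^ 2 := by
    rw [hD, mul_comm X, catalanSeries_sq_mul_X_add_one, mul_comm]
  have h' : D ^ (j + 1) = X * (D ^ j + 2 * D ^ (j + 1) + D ^ (j + 2)) := by
    calc D ^ (j + 1) = D ^ j * (X * (D + 1) ^ 2) := by rw [← h, pow_succ]
      _ = _ := by ring
  conv_lhs => rw [h', coeff_succ_X_mul]
  simp [two_mul]

theorem card_forests_add_choose (n k : ℕ) :
    (forests (k + 1) (n + 1)).card + (2 * n + 1).choose (n + k + 2) =
      (2 * n + 1).choose (n + k + 1) := by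
  have h₀ : ∀ j, (forests (j + 1) 0).card = 0 := fun j => by
    simp [card_forests, mul_pow, pow_succ]
  have h₁ : ∀ m, (forests 0 (m + 1)).card = 0 := fun m => by simp [forests]
  have pascal : ∀ N r : ℕ, (N + 2).choose (r + 2) =
      N.choose r + 2 * N.choose (r + 1) + N.choose (r + 2) := fun N r => by
    simp only [Nat.choose_succ_succ]; ring
  induction n generalizing k with
  | zero =>
    rw [card_forests_succ_succ, h₀, h₀]
    cases k with
    | zero => simp [forests]
    | succ k => simp [h₀, Nat.choose_eq_zero_of_lt]
  | succ n ih =>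
    rw [card_forests_succ_succ]
    have e₁ := pascal (2 * n + 1) (n + k)
    have e₂ := pascal (2 * n + 1) (n + k + 1)
    have i₁ := ih k
    have i₂ := ih (k + 1)
    rw [show 2 * (n + 1) + 1 = 2 * n + 1 + 2 by ring,
      show n + 1 + k + 2 = n + k + 1 + 2 by ring, show n + 1 + k + 1 = n + k + 2 by ring, e₁, e₂]
    cases k with
    | zero =>
      have := Nat.choose_symm_half n
      simp only [h₁, Nat.add_zero, Nat.zero_add, Nat.add_assoc, Nat.reduceAdd] at *
      omega
    | succ k =>
      have i₀ := ih k
      rw [show n + (k + 1 + 1) = n + k + 2 by ring] at i₂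
      rw [show n + (k + 1) = n + k + 1 by ring] at *
      simp only [Nat.add_assoc, Nat.reduceAdd] at *
      omega

theorem card_forests_mul (n k : ℕ) (hk : k ≤ n) :
    (n + k + 2) * (forests (k + 1) (n + 1)).card = 2 * (k + 1) * (2 * n + 1).choose (n - k) := by
  have h := card_forests_add_choose n k
  have h' := Nat.choose_succ_right_eq (2 * n + 1) (n + k + 1)
  rw [show 2 * n + 1 - (n + k + 1) = n - k by omega] at h'
  rw [show (2 * n + 1).choose (n - k) = (2 * n + 1).choose (n + k + 1) from
    Nat.choose_symm_of_eq_add (by omega)]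
  obtain ⟨d, rfl⟩ := Nat.exists_eq_add_of_le hk
  rw [Nat.add_sub_cancel_left] at h'
  simp only [Nat.add_assoc, Nat.reduceAdd] at *
  nlinarith

end BinaryTree

/-- A pair of functions encoding a model structure on a linear order: `g` sends an element to the
largest element weakly equivalent to it, and `f` sends an element to the largest element to which
it maps by an acyclic fibration. -/
structure IsNestedPair {α : Type*} [LinearOrder α] (f g : α → α) : Prop where
  le_left : ∀ a, a ≤ f a
  left_le_right : ∀ a, f a ≤ g a
  nested : ∀ a c, a ≤ c → c ≤ f a → f c ≤ f a
  block : ∀ a c, a ≤ c → c ≤ g a → g c = g a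

open BinaryTree in
theorem card_fixed_eq_length {L : List (BinaryTree Unit)} (hL : ∀ t ∈ L, t ≠ nil) {m : ℕ}
    (hm : forestSize L = m) {g : Fin m → Fin m} (hg : ∀ a, (g a : ℕ) = blockEnd L 0 a) :
    (Finset.univ.filter fun a => g a = a).card = L.length := by
  rw [← card_blockEnd_fixed hL 0]
  refine Finset.card_bij (fun a _ => (a : ℕ)) (fun a ha => ?_) (fun a _ b _ h => Fin.ext h)
    fun b hb => ?_
  · simpa [hm, ← hg, Fin.ext_iff] using ha
  · simp only [zero_add, Finset.mem_filter, Finset.mem_Ico, zero_le, true_and, hm] at hb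
    exact ⟨⟨b, hb.1⟩, by simpa [Fin.ext_iff, hg] using hb.2, rfl⟩

open BinaryTree in
theorem card_isNestedPair (m j : ℕ) :
    Nat.card {p : (Fin m → Fin m) × (Fin m → Fin m) // IsNestedPair p.1 p.2 ∧
      (Finset.univ.filter fun a => p.2 a = a).card = j} = (forests j m).card := by
  have mem : ∀ (L : forests j m) (a : Fin m), a ≤ forestLeftEnd L.1 0 a ∧
      forestLeftEnd L.1 0 a ≤ blockEnd L.1 0 a ∧ blockEnd L.1 0 a < m := by
    rintro ⟨L, hL⟩ a
    obtain ⟨-, -, rfl⟩ := mem_forests.1 hL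
    simpa using forestLeftEnd_mem L (o := 0) (Nat.zero_le a) (by simp)
  let φ (L : forests j m) : (Fin m → Fin m) × (Fin m → Fin m) :=
    (fun a => ⟨forestLeftEnd L.1 0 a, (mem L a).2.1.trans_lt (mem L a).2.2⟩,
      fun a => ⟨blockEnd L.1 0 a, (mem L a).2.2⟩)
  have hφ : ∀ L, IsNestedPair (φ L).1 (φ L).2 ∧
      (Finset.univ.filter fun a => (φ L).2 a = a).card = j := by
    intro L
    have hmem := mem L
    obtain ⟨L, hL⟩ := L
    obtain ⟨hnil, rfl, rfl⟩ := mem_forests.1 hL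
    refine ⟨⟨fun a => (hmem a).1, fun a => (hmem a).2.1, fun a c h h' => ?_, fun a c h h' => ?_⟩, ?_⟩
    · exact forestLeftEnd_nested L (o := 0) (Nat.zero_le a) (by simp) h h'
    · exact Fin.ext (blockEnd_eq L (o := 0) (Nat.zero_le a) (by simp) h h')
    · exact card_fixed_eq_length hnil rfl fun _ => rfl
  rw [← Nat.card_eq_finsetCard (forests j m)]
  refine (Nat.card_congr (Equiv.ofBijective (fun L => ⟨φ L, hφ L⟩) ⟨?_, ?_⟩)).symm
  · rintro ⟨L, hL⟩ ⟨L', hL'⟩ h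
    simp only [Subtype.mk.injEq, φ, Prod.mk.injEq, funext_iff, Fin.mk.injEq] at h
    obtain ⟨h₁, -, h₂⟩ := mem_forests.1 hL
    obtain ⟨h₁', -, h₂'⟩ := mem_forests.1 hL'
    refine Subtype.ext (forest_ext (o := 0) h₁ h₁' (h₂.trans h₂'.symm) fun a _ ha => ?_)
    have ham : a < m := by simpa [h₂] using ha
    exact ⟨h.1 ⟨a, ham⟩, h.2 ⟨a, ham⟩⟩
  · rintro ⟨⟨f, g⟩, hfg, hcard⟩
    obtain ⟨L, hnil, hsize, hL⟩ := exists_forest_eq m 0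
      (fun a => if h : a < m then f ⟨a, h⟩ else a) (fun a => if h : a < m then g ⟨a, h⟩ else a)
      (fun a _ ha => by
        simp only [zero_add] at ha
        simpa [ha] using And.intro (Fin.le_def.1 (hfg.le_left ⟨a, ha⟩)) (hfg.left_le_right ⟨a, ha⟩))
      (fun a c _ ha hac hca => by
        simp only [zero_add] at ha
        simp only [ha, dite_true] at hca
        have hc : c < m := hca.trans_lt (Fin.is_lt _)
        simpa [ha, hc] using hfg.nested ⟨a, ha⟩ ⟨c, hc⟩ hac hca)
      (fun a c _ ha hac hca => by
        simp only [zero_add] at ha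
        simp only [ha, dite_true] at hca
        have hc : c < m := hca.trans_lt (Fin.is_lt _)
        simpa [ha, hc] using congrArg Fin.val (hfg.block ⟨a, ha⟩ ⟨c, hc⟩ hac hca))
    have hL' : ∀ a : Fin m, forestLeftEnd L 0 a = f a ∧ blockEnd L 0 a = g a := fun a => by
      simpa using hL a (Nat.zero_le _) (by simp)
    have hlen : L.length = j :=
      (card_fixed_eq_length hnil hsize fun a => (hL' a).2.symm).symm.trans hcard
    refine ⟨⟨L, mem_forests.2 ⟨hnil, hlen, hsize⟩⟩, Subtype.ext (Prod.ext ?_ ?_)⟩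
    · exact funext fun a => Fin.ext (hL' a).1
    · exact funext fun a => Fin.ext (hL' a).2

section LinearOrder

variable {α : Type u} [LinearOrder α]

theorem hasLiftingProperty_iff_of_linearOrder {a b x y : α} (i : a ⟶ b) (p : x ⟶ y) :
    HasLiftingProperty i p ↔ (a ≤ x → b ≤ y → b ≤ x) := by
  refine ⟨fun h hax hby => ?_, fun h => ⟨fun {u v} _ => ?_⟩⟩
  · have sq : CommSq (homOfLE hax) i p (homOfLE hby) := ⟨Subsingleton.elim _ _⟩
    have := h.sq_hasLift sq
    exact sq.lift.le
  · exact ⟨⟨⟨homOfLE (h u.le v.le), Subsingleton.elim _ _, Subsingleton.elim _ _⟩⟩⟩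

theorem stableUnderRetractsHom_of_linearOrder (P : MorphismProperty α) :
    StableUnderRetractsHom P := by
  rintro X Y X' Y' f g ⟨a, b, a', b', -⟩ hg
  obtain rfl := le_antisymm a.le a'.le
  obtain rfl := le_antisymm b.le b'.le
  exact Subsingleton.elim g f ▸ hg

namespace IsNestedPair

/-- The relation `a ⟶ b` has the left lifting property against all the maps `x ⟶ y` with
`y ≤ f x`. -/
def IsCof (f : α → α) (a b : α) : Prop :=
  ∀ x y, x ≤ y → y ≤ f x → a ≤ x → b ≤ y → b ≤ x

/-- The relation `x ⟶ y` has the right lifting property against all the acyclic cofibrations. -/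
def IsFib (f g : α → α) (x y : α) : Prop :=
  ∀ a b, a ≤ b → b ≤ g a → IsCof f a b → a ≤ x → b ≤ y → b ≤ x

variable {f g : α → α}

theorem IsCof.trans {a b c : α} (h : IsCof f a b) (h' : IsCof f b c)
    (hbc : b ≤ c) : IsCof f a c :=
  fun x y hxy hy hax hcy => h' x y hxy hy (h x y hxy hy hax (hbc.trans hcy)) hcy

theorem exists_factor_isCof [Finite α] (h : IsNestedPair f g) {x y : α} (hxy : x ≤ y) :
    ∃ z, x ≤ z ∧ z ≤ y ∧ IsCof f x z ∧ y ≤ f z := by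
  obtain ⟨z, ⟨hxz, hzy, hyz⟩, hmin⟩ := (Set.toFinite {z | x ≤ z ∧ z ≤ y ∧ y ≤ f z}).exists_minimal
    ⟨y, hxy, le_rfl, h.le_left y⟩
  refine ⟨z, hxz, hzy, fun p q hpq hq hxp hzq => ?_, hyz⟩
  by_contra! hp
  exact hp.not_ge (hmin ⟨hxp, hp.le.trans hzy,
    hyz.trans (h.nested p z hp.le (hzq.trans hq))⟩ hp.le)

theorem le_right (h : IsNestedPair f g) (a : α) : a ≤ g a :=
  (h.le_left a).trans (h.left_le_right a)

theorem exists_factor_isFib [Finite α] (h : IsNestedPair f g) {x y : α} (hxy : x ≤ y) :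
    ∃ z, x ≤ z ∧ z ≤ y ∧ IsCof f x z ∧ z ≤ g x ∧ IsFib f g z y := by
  obtain ⟨z, ⟨hxz, hzy, hc, hw⟩, hmax⟩ :=
    (Set.toFinite {z | x ≤ z ∧ z ≤ y ∧ IsCof f x z ∧ z ≤ g x}).exists_maximal
      ⟨x, le_rfl, hxy, fun _ _ _ _ h _ => h, h.le_right x⟩
  refine ⟨z, hxz, hzy, hc, hw, fun p q hpq hq hcof hpz hqy => ?_⟩
  by_contra! hz
  have hzq : IsCof f z q := fun s t hst ht hzs hqt => hcof s t hst ht (hpz.trans hzs) hqt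
  refine hz.not_ge (hmax ⟨hxz.trans hz.le, hqy, hc.trans hzq hz.le, ?_⟩ hz.le)
  rw [← h.block x z hxz hw, h.block p z hpz (hz.le.trans hq)]
  exact hq

theorem isFib_and_le_right_iff [Finite α] (h : IsNestedPair f g) {x y : α} (hxy : x ≤ y) :
    IsFib f g x y ∧ y ≤ g x ↔ y ≤ f x := by
  refine ⟨fun ⟨hF, hW⟩ => ?_, fun hy => ⟨fun a b _ _ hc => hc x y hxy hy,
    hy.trans (h.left_le_right x)⟩⟩
  obtain ⟨z, hxz, hzy, hc, hz⟩ := h.exists_factor_isCof hxy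
  exact le_antisymm (hF x z hxz (hzy.trans hW) hc le_rfl hzy) hxz ▸ hz

/-- The model structure encoded by a nested pair of functions. -/
def toModelStructure [Finite α] (h : IsNestedPair f g) : ModelStructure α where
  weq a b _ := b ≤ g a
  fib a b _ := IsFib f g a b
  cof a b _ := IsCof f a b
  weq_comp := ⟨fun {a b c} i j hi hj => h.block a b i.le hi ▸ hj⟩
  fib_comp := ⟨fun {x y z} i j hi hj a b hab hb hc hax hbz =>
    hi a b hab hb hc hax (hj a b hab hb hc (hax.trans i.le) hbz)⟩
  cof_comp := ⟨fun {a b c} i j hi hj => hi.trans hj j.le⟩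
  weq_retract := stableUnderRetractsHom_of_linearOrder _
  fib_retract := stableUnderRetractsHom_of_linearOrder _
  cof_retract := stableUnderRetractsHom_of_linearOrder _
  weq_two_out_of_three :=
    { comp_mem := fun {a b c} i j hi hj => h.block a b i.le hi ▸ hj
      of_postcomp := fun {a b c} i j _ hij => j.le.trans hij
      of_precomp := fun {a b c} i j hi hij => (h.block a b i.le hi).symm ▸ hij }
  lift_cof_trivFib a b x y i p hi hp hw :=
    (hasLiftingProperty_iff_of_linearOrder i p).2
      (hi x y p.le ((h.isFib_and_le_right_iff p.le).1 ⟨hp, hw⟩))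
  lift_trivCof_fib a b x y i p hi hw hp :=
    (hasLiftingProperty_iff_of_linearOrder i p).2 (hp a b i.le hw hi)
  factor_cof_trivFib x y i := by
    obtain ⟨z, hxz, hzy, hc, hz⟩ := h.exists_factor_isCof i.le
    have hz' := (h.isFib_and_le_right_iff hzy).2 hz
    exact ⟨z, homOfLE hxz, homOfLE hzy, hc, hz'.1, hz'.2, Subsingleton.elim _ _⟩
  factor_trivCof_fib x y i := by
    obtain ⟨z, hxz, hzy, hc, hw, hz⟩ := h.exists_factor_isFib i.le
    exact ⟨z, homOfLE hxz, homOfLE hzy, hc, hw, hz, Subsingleton.elim _ _⟩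

end IsNestedPair

namespace ModelStructure

theorem ext_of_classes {C : Type u} [Category.{v} C] {M N : ModelStructure C}
    (hw : M.weq = N.weq) (hf : M.fib = N.fib) (hc : M.cof = N.cof) : M = N := by
  cases M; cases N; cases hw; cases hf; cases hc; rfl

variable (M : ModelStructure α)

theorem lift_le_of_trivFib {a b x y : α} {i : a ⟶ b} {p : x ⟶ y} (hi : M.cof i) (hp : M.fib p)
    (hw : M.weq p) (hax : a ≤ x) (hby : b ≤ y) : b ≤ x :=
  (hasLiftingProperty_iff_of_linearOrder i p).1 (M.lift_cof_trivFib i p hi hp hw) hax hby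

theorem lift_le_of_trivCof {a b x y : α} {i : a ⟶ b} {p : x ⟶ y} (hi : M.cof i) (hw : M.weq i)
    (hp : M.fib p) (hax : a ≤ x) (hby : b ≤ y) : b ≤ x :=
  (hasLiftingProperty_iff_of_linearOrder i p).1 (M.lift_trivCof_fib i p hi hw hp) hax hby

/-- The acyclic fibrations, as a relation. -/
def TrivFib (a b : α) : Prop := ∃ h : a ≤ b, M.fib (homOfLE h) ∧ M.weq (homOfLE h)

/-- The acyclic cofibrations, as a relation. -/
def TrivCof (a b : α) : Prop := ∃ h : a ≤ b, M.cof (homOfLE h) ∧ M.weq (homOfLE h)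

/-- The weak equivalences, as a relation. -/
def Weq (a b : α) : Prop := ∃ h : a ≤ b, M.weq (homOfLE h)

variable {M}

theorem weq_iff {a b : α} (i : a ⟶ b) : M.weq i ↔ M.Weq a b :=
  ⟨fun h => ⟨i.le, h⟩, fun ⟨_, h⟩ => h⟩

theorem cof_iff {a b : α} (i : a ⟶ b) :
    M.cof i ↔ ∀ x y, M.TrivFib x y → a ≤ x → b ≤ y → b ≤ x := by
  refine ⟨fun hi x y ⟨_, hf, hw⟩ => M.lift_le_of_trivFib hi hf hw, fun h => ?_⟩
  obtain ⟨z, j, p, hj, hp, hw, -⟩ := M.factor_cof_trivFib i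
  obtain rfl := le_antisymm p.le (h z b ⟨p.le, hp, hw⟩ j.le le_rfl)
  exact Subsingleton.elim j i ▸ hj

theorem fib_iff {x y : α} (p : x ⟶ y) :
    M.fib p ↔ ∀ a b, M.TrivCof a b → a ≤ x → b ≤ y → b ≤ x := by
  refine ⟨fun hp a b ⟨_, hc, hw⟩ => M.lift_le_of_trivCof hc hw hp, fun h => ?_⟩
  obtain ⟨z, i, q, hi, hw, hq, -⟩ := M.factor_trivCof_fib p
  obtain rfl := le_antisymm (h x z ⟨i.le, hi, hw⟩ le_rfl q.le) i.le
  exact Subsingleton.elim q p ▸ hq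

theorem TrivFib.weq {a b : α} (h : M.TrivFib a b) : M.Weq a b := ⟨h.1, h.2.2⟩

theorem TrivCof.weq {a b : α} (h : M.TrivCof a b) : M.Weq a b := ⟨h.1, h.2.2⟩

theorem Weq.trans {a b c : α} : M.Weq a b → M.Weq b c → M.Weq a c :=
  fun ⟨h, h'⟩ ⟨k, k'⟩ => ⟨h.trans k, M.weq_comp.comp_mem _ _ h' k'⟩

theorem TrivFib.trans {a b c : α} (h : M.TrivFib a b) (h' : M.TrivFib b c) : M.TrivFib a c :=
  ⟨h.1.trans h'.1, M.fib_comp.comp_mem _ _ h.2.1 h'.2.1, (h.weq.trans h'.weq).2⟩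

theorem Weq.of_left {a b c : α} (h : M.Weq a b) (h' : M.Weq a c) (hbc : b ≤ c) : M.Weq b c :=
  have := M.weq_two_out_of_three
  ⟨hbc, M.weq.of_precomp (homOfLE h.1) (homOfLE hbc) h.2 h'.2⟩

theorem Weq.of_right {a b c : α} (h : M.Weq b c) (h' : M.Weq a c) (hab : a ≤ b) : M.Weq a b :=
  have := M.weq_two_out_of_three
  ⟨hab, M.weq.of_postcomp (homOfLE hab) (homOfLE h.1) h.2 h'.2⟩

theorem TrivFib.refl (a : α) : M.TrivFib a a := by
  obtain ⟨z, i, p, -, hp, hw, -⟩ := M.factor_cof_trivFib (𝟙 a)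
  obtain rfl := le_antisymm i.le p.le
  exact ⟨le_rfl, hp, hw⟩

theorem TrivFib.of_le {a b c : α} (h : M.TrivFib a b) (hac : a ≤ c) (hcb : c ≤ b) :
    M.TrivFib a c := by
  obtain ⟨z, i, p, hi, hp, hw, -⟩ := M.factor_cof_trivFib (homOfLE hac)
  have hza := M.lift_le_of_trivFib hi h.2.1 h.2.2 le_rfl (p.le.trans hcb)
  obtain rfl := le_antisymm i.le hza
  exact ⟨hac, hp, hw⟩

theorem TrivCof.of_le {a b c : α} (h : M.TrivCof a b) (hac : a ≤ c) (hcb : c ≤ b) :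
    M.TrivCof c b := by
  obtain ⟨z, i, p, hi, hw, hp, -⟩ := M.factor_trivCof_fib (homOfLE hcb)
  have hbz := M.lift_le_of_trivCof h.2.1 h.2.2 hp (hac.trans i.le) le_rfl
  obtain rfl := le_antisymm p.le hbz
  exact ⟨hcb, hi, hw⟩

theorem Weq.of_le {a b c : α} (h : M.Weq a b) (hac : a ≤ c) (hcb : c ≤ b) :
    M.Weq a c := by
  obtain ⟨z, i, p, hi, hp, hw, -⟩ := M.factor_cof_trivFib (homOfLE h.1)
  have hzb : M.TrivFib z b := ⟨p.le, hp, hw⟩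
  have haz : M.TrivCof a z := ⟨i.le, hi, (hzb.weq.of_right h i.le).2⟩
  rcases le_total c z with hcz | hzc
  · exact (haz.of_le hac hcz).weq.of_right haz.weq hac
  · exact haz.weq.trans (hzb.of_le hzc hcb).weq

theorem exists_forall_iff_le [Finite α] {R : α → α → Prop} (hR : ∀ a b, R a b → a ≤ b)
    (hrefl : ∀ a, R a a) (hle : ∀ a b c, R a b → a ≤ c → c ≤ b → R a c) :
    ∃ f : α → α, ∀ a, a ≤ f a ∧ ∀ b, a ≤ b → (b ≤ f a ↔ R a b) := by
  have : ∀ a, ∃ b, a ≤ b ∧ ∀ c, a ≤ c → (c ≤ b ↔ R a c) := fun a => by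
    obtain ⟨b, hb, hmax⟩ := (Set.toFinite {b | R a b}).exists_maximal ⟨a, hrefl a⟩
    refine ⟨b, hR a b hb, fun c hac => ⟨fun h => hle a b c hb hac h, fun h => ?_⟩⟩
    exact (le_total c b).elim id fun h' => hmax h h'
  choose f hf using this
  exact ⟨f, hf⟩

theorem exists_isNestedPair [Finite α] (M : ModelStructure α) :
    ∃ (f g : α → α) (h : IsNestedPair f g), h.toModelStructure = M := by
  obtain ⟨f, hf⟩ := exists_forall_iff_le (R := M.TrivFib) (fun _ _ h => h.1) TrivFib.refl
    fun _ _ _ h => h.of_le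
  obtain ⟨g, hg⟩ := exists_forall_iff_le (R := M.Weq) (fun _ _ h => h.1)
    (fun a => (TrivFib.refl a).weq) fun _ _ _ h => h.of_le
  have hf₀ : ∀ a, M.TrivFib a (f a) := fun a => ((hf a).2 _ (hf a).1).1 le_rfl
  have hg₀ : ∀ a, M.Weq a (g a) := fun a => ((hg a).2 _ (hg a).1).1 le_rfl
  have h : IsNestedPair f g :=
    { le_left := fun a => (hf a).1
      left_le_right := fun a => ((hg a).2 _ (hf a).1).2 (hf₀ a).weq
      nested := fun a c hac hca => ((hf a).2 _ (hac.trans (hf c).1)).2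
        ((((hf a).2 c hac).1 hca).trans (hf₀ c))
      block := fun a c hac hca => by
        have hw := ((hg a).2 c hac).1 hca
        exact le_antisymm (((hg a).2 _ (hac.trans (hg c).1)).2 (hw.trans (hg₀ c)))
          (((hg c).2 _ hca).2 (hw.of_left (hg₀ a) hca)) }
  have hcof : h.toModelStructure.cof = M.cof := by
    ext a b i
    rw [cof_iff (M := M)]
    exact ⟨fun hi x y hxy => hi x y hxy.1 (((hf x).2 y hxy.1).2 hxy),
      fun hi x y hxy hy => hi x y (((hf x).2 y hxy).1 hy)⟩
  have hweq : h.toModelStructure.weq = M.weq := by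
    ext a b i
    rw [weq_iff (M := M)]
    exact (hg a).2 b i.le
  refine ⟨f, g, h, ext_of_classes hweq ?_ hcof⟩
  ext x y p
  rw [fib_iff, fib_iff]
  simp only [TrivCof, hcof, hweq]

end ModelStructure

theorem IsNestedPair.toModelStructure_inj [Finite α] {f g f' g' : α → α} (h : IsNestedPair f g)
    (h' : IsNestedPair f' g') (e : h.toModelStructure = h'.toModelStructure) :
    f = f' ∧ g = g' := by
  have hW : ∀ a b, a ≤ b → (b ≤ g a ↔ b ≤ g' a) := fun a b hab =>
    iff_of_eq (congrArg (fun M : ModelStructure α => M.weq (homOfLE hab)) e)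
  have hF : ∀ a b, a ≤ b → (b ≤ f a ↔ b ≤ f' a) := fun a b hab => by
    rw [← h.isFib_and_le_right_iff hab, ← h'.isFib_and_le_right_iff hab]
    exact iff_of_eq (congrArg (fun M : ModelStructure α =>
      M.fib (homOfLE hab) ∧ M.weq (homOfLE hab)) e)
  refine ⟨funext fun a => ?_, funext fun a => ?_⟩
  · exact le_antisymm ((hF a _ (h.le_left a)).1 le_rfl) ((hF a _ (h'.le_left a)).2 le_rfl)
  · exact le_antisymm ((hW a _ (h.le_right a)).1 le_rfl) ((hW a _ (h'.le_right a)).2 le_rfl)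

theorem IsNestedPair.right_mono {f g : α → α} (h : IsNestedPair f g) : Monotone g := fun a b hab =>
  (le_total b (g a)).elim (fun hb => (h.block a b hab hb).ge) fun hb => hb.trans (h.le_right b)

theorem IsNestedPair.right_right {f g : α → α} (h : IsNestedPair f g) (a : α) : g (g a) = g a :=
  h.block a (g a) (h.le_right a) le_rfl

/-- The homotopy category of the model structure encoded by `(f, g)` is the order of fixed points
of `g`, to which `g` is a reflection. -/
theorem IsNestedPair.nonempty_localization_equivalence [Finite α] {f g : α → α}
    (h : IsNestedPair f g) :
    Nonempty (h.toModelStructure.weq.Localization ≌ {a : α // g a = a}) := by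
  let q : α → {a : α // g a = a} := fun a => ⟨g a, h.right_right a⟩
  have gc : GaloisConnection q Subtype.val := fun a b =>
    ⟨fun hab => (h.le_right a).trans hab, fun hab => (h.right_mono hab).trans b.2.le⟩
  have : gc.monotone_u.functor.Full := ⟨fun i => ⟨homOfLE i.le, Subsingleton.elim _ _⟩⟩
  have : gc.monotone_u.functor.Faithful := ⟨fun _ => Subsingleton.elim _ _⟩
  have hloc := gc.adjunction.isLocalization
  have hW : (MorphismProperty.isomorphisms {a : α // g a = a}).inverseImage
      gc.monotone_l.functor = h.toModelStructure.weq := by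
    ext a b i
    simp only [MorphismProperty.inverseImage_iff, MorphismProperty.isomorphisms.iff]
    constructor
    · intro _
      exact (h.le_right b).trans (inv (gc.monotone_l.functor.map i)).le
    · intro hb
      have e : g b = g a := h.block a b i.le hb
      exact ⟨homOfLE (show q b ≤ q a from e.le), Subsingleton.elim _ _, Subsingleton.elim _ _⟩
  rw [hW] at hloc
  exact ⟨Localization.uniq h.toModelStructure.weq.Q gc.monotone_l.functor
    h.toModelStructure.weq⟩

theorem IsNestedPair.nonempty_localization_equivalence_fin_iff [Fintype α] {f g : α → α}
    (h : IsNestedPair f g) (j : ℕ) :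
    Nonempty (h.toModelStructure.weq.Localization ≌ Fin j) ↔
      (Finset.univ.filter fun a => g a = a).card = j := by
  obtain ⟨e⟩ := h.nonempty_localization_equivalence
  rw [← Fintype.card_subtype]
  constructor
  · rintro ⟨e'⟩
    simpa using Fintype.card_congr (e.symm.trans e').toOrderIso.toEquiv
  · intro hj
    exact ⟨e.trans (Fintype.orderIsoFinOfCardEq _ hj).symm.equivalence⟩

end LinearOrder

/-- For `0 ≤ k ≤ n`, if `N` is the number of model structures on `[n]` whose
homotopy category (the localization at the weak equivalences) is equivalent to
`[k]`, then `(n + k + 2) * N = 2 * (k + 1) * C(2n+1, n-k)`. -/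
theorem card_model_structures_with_homotopy_category (n k : ℕ) (hk : k ≤ n) :
    (n + k + 2) *
      Nat.card {M : ModelStructure (Fin (n + 1)) //
        Nonempty (M.weq.Localization ≌ Fin (k + 1))} =
      2 * (k + 1) * Nat.choose (2 * n + 1) (n - k) := by
  rw [← BinaryTree.card_forests_mul n k hk, ← card_isNestedPair]
  congr 1
  refine (Nat.card_congr (Equiv.ofBijective (fun p => ⟨p.2.1.toModelStructure,
    (p.2.1.nonempty_localization_equivalence_fin_iff (k + 1)).2 p.2.2⟩) ⟨?_, ?_⟩)).symm
  · rintro ⟨⟨f, g⟩, h, _⟩ ⟨⟨f', g'⟩, h', _⟩ e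
    exact Subtype.ext (Prod.ext_iff.2 (h.toModelStructure_inj h' (Subtype.ext_iff.1 e)))
  · rintro ⟨M, hM⟩
    obtain ⟨f, g, h, rfl⟩ := M.exists_isNestedPair
    exact ⟨⟨(f, g), h, (h.nonempty_localization_equivalence_fin_iff (k + 1)).1 hM⟩, rfl⟩
end

section
/- For every n : ℕ, the number of model structures on the category [n] in which every morphism is a weak equivalence (contractible model structures) is the Catalan number catalan(n+1). -/
universe v u

open CategoryTheory

/-- Bracketing functions on the interval `[a, b)`: inflationary self-maps `f` of `[a, b)` with
`f j ≤ f i` whenever `i ≤ j ≤ f i`, extended by zero outside of the interval. -/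
def bracketing (a b : ℕ) : Set (ℕ → ℕ) :=
  {f | (∀ i, a ≤ i → i < b → i ≤ f i ∧ f i < b ∧ ∀ j, i ≤ j → j ≤ f i → f j ≤ f i) ∧
    ∀ i, i < a ∨ b ≤ i → f i = 0}

/-- A bracketing function on `[a, b)` with value `k` at `a` splits into bracketing functions on
`[a + 1, k + 1)` and `[k + 1, b)`. -/
def bracketingFiberEquiv {a b k : ℕ} (hak : a ≤ k) (hkb : k < b) :
    {f : bracketing a b // f.1 a = k} ≃ bracketing (a + 1) (k + 1) × bracketing (k + 1) b where
  toFun f :=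
    (⟨fun i => if a + 1 ≤ i ∧ i < k + 1 then f.1.1 i else 0, by
        obtain ⟨⟨f, hf, hf0⟩, rfl : f a = k⟩ := f
        refine ⟨fun i hai hik => ?_, fun i hi => if_neg (by omega)⟩
        have ha := hf a le_rfl (by omega)
        have hi := hf i (by omega) (by omega)
        have hia := ha.2.2 i (by omega) (by omega)
        simp only [hai, hik, and_self, if_true]
        refine ⟨hi.1, by omega, fun j hij hj => ?_⟩
        rw [if_pos (by omega)]
        exact hi.2.2 j hij hj⟩,
      ⟨fun i => if k + 1 ≤ i then f.1.1 i else 0, by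
        obtain ⟨⟨f, hf, hf0⟩, rfl : f a = k⟩ := f
        refine ⟨fun i hai hib => ?_, fun i hi => ?_⟩
        · have hi := hf i (by omega) (by omega)
          simp only [hai, if_true]
          refine ⟨hi.1, hi.2.1, fun j hij hj => ?_⟩
          rw [if_pos (by omega)]
          exact hi.2.2 j hij hj
        · dsimp only
          split_ifs with h
          · exact hf0 i (by omega)
          · rfl⟩)
  invFun p :=
    ⟨⟨fun i => if i = a then k else if i < k + 1 then p.1.1 i else p.2.1 i, by
      obtain ⟨⟨g, hg, hg0⟩, ⟨h, hh, hh0⟩⟩ := p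
      refine ⟨fun i hai hib => ?_, fun i hi => ?_⟩
      · dsimp only
        by_cases hia : i = a
        · subst hia
          simp only [if_true]
          refine ⟨hak, hkb, fun j hij hjk => ?_⟩
          split_ifs with h1 h2
          · exact le_rfl
          · have := hg j (by omega) h2
            omega
          · omega
        · simp only [hia, if_false]
          by_cases hik : i < k + 1
          · simp only [hik, if_true]
            have hi := hg i (by omega) hik
            refine ⟨hi.1, by omega, fun j hij hj => ?_⟩
            rw [if_neg (by omega), if_pos (by omega)]
            exact hi.2.2 j hij hj
          · simp only [hik, if_false]
            have hi := hh i (by omega) hib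
            refine ⟨hi.1, by omega, fun j hij hj => ?_⟩
            rw [if_neg (by omega), if_neg (by omega)]
            exact hi.2.2 j hij hj
      · dsimp only
        rw [if_neg (by omega)]
        split_ifs with h2
        · exact hg0 i (by omega)
        · exact hh0 i (by omega)⟩, if_pos rfl⟩
  left_inv f := by
    obtain ⟨⟨f, hf, hf0⟩, hfa : f a = k⟩ := f
    refine Subtype.ext (Subtype.ext (funext fun i => ?_))
    have := hf0 i
    dsimp only
    grind
  right_inv p := by
    obtain ⟨⟨g, hg, hg0⟩, ⟨h, hh, hh0⟩⟩ := p
    refine Prod.ext (Subtype.ext (funext fun i => ?_)) (Subtype.ext (funext fun i => ?_))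
    · have := hg0 i
      dsimp only
      grind
    · have := hh0 i
      dsimp only
      grind

theorem bracketing_self (a : ℕ) : bracketing a a = {0} := by
  ext f
  refine ⟨fun hf => funext fun i => hf.2 i (by omega), ?_⟩
  rintro rfl
  exact ⟨fun i h h' => by omega, fun i _ => rfl⟩

theorem finite_and_card_bracketing (m a : ℕ) :
    Finite (bracketing a (a + m)) ∧ Nat.card (bracketing a (a + m)) = catalan m := by
  induction m using Nat.strong_induction_on generalizing a with
  | _ m ih =>
    cases m with
    | zero =>
      rw [Nat.add_zero, bracketing_self]
      exact ⟨inferInstance, by simp⟩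
    | succ m =>
      let value (f : bracketing a (a + (m + 1))) : Fin (m + 1) :=
        ⟨f.1 a - a, by have := f.2.1 a le_rfl (by omega); omega⟩
      have fiberEquiv (k : Fin (m + 1)) : {f // value f = k} ≃
          bracketing (a + 1) (a + 1 + k) × bracketing (a + 1 + k) (a + 1 + k + (m - k)) := by
        have h₁ : a + 1 + k = a + k + 1 := by omega
        have h₂ : a + 1 + k + (m - k) = a + (m + 1) := by omega
        rw [h₂, h₁]
        refine (Equiv.subtypeEquivRight fun f => ?_).trans
          (bracketingFiberEquiv (a := a) (k := a + k) (by omega) (by omega))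
        have := f.2.1 a le_rfl (by omega)
        simp only [value, Fin.ext_iff]
        omega
      have hfin (k : Fin (m + 1)) : Finite {f // value f = k} := by
        have := (ih k (by omega) (a + 1)).1
        have := (ih (m - k) (by omega) (a + 1 + k)).1
        exact Finite.of_equiv _ (fiberEquiv k).symm
      refine ⟨Finite.of_equiv _ (Equiv.sigmaFiberEquiv value), ?_⟩
      rw [← Nat.card_congr (Equiv.sigmaFiberEquiv value), Nat.card_sigma, catalan_succ]
      refine Finset.sum_congr rfl fun k _ => ?_
      rw [Nat.card_congr (fiberEquiv k), Nat.card_prod, (ih k (by omega) _).2,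
        (ih (m - k) (by omega) _).2]

theorem hasLiftingProperty_iff_of_preorder {α : Type u} [Preorder α] {a b x y : α}
    (i : a ⟶ b) (p : x ⟶ y) : HasLiftingProperty i p ↔ (a ≤ x → b ≤ y → b ≤ x) := by
  refine ⟨fun h hax hby => ?_, fun h => ⟨fun {f g} sq => ?_⟩⟩
  · have sq : CommSq (homOfLE hax) i p (homOfLE hby) := ⟨Subsingleton.elim _ _⟩
    exact leOfHom sq.lift
  · exact ⟨⟨⟨homOfLE (h (leOfHom f) (leOfHom g)), Subsingleton.elim _ _, Subsingleton.elim _ _⟩⟩⟩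

theorem stableUnderRetractsHom_of_partialOrder {α : Type u} [PartialOrder α]
    (P : MorphismProperty α) : StableUnderRetractsHom P := by
  rintro X Y X' Y' f g ⟨a, b, a', b', -⟩ hg
  obtain rfl := le_antisymm (leOfHom a) (leOfHom a')
  obtain rfl := le_antisymm (leOfHom b) (leOfHom b')
  rwa [Subsingleton.elim f g]

/-- The contractible model structure on `[n]` whose fibrations are the morphisms `x ⟶ y` with
`y ≤ f x`. -/
def bracketing.modelStructure {n : ℕ} (f : bracketing 0 (n + 1)) :
    ModelStructure (Fin (n + 1)) :=
  have le_apply (x : Fin (n + 1)) : x.1 ≤ f.1 x := (f.2.1 x (by omega) x.2).1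
  have apply_le {x y : Fin (n + 1)} (hxy : x ≤ y) (hy : y.1 ≤ f.1 x) : f.1 y ≤ f.1 x :=
    (f.2.1 x (by omega) x.2).2.2 y hxy hy
  have lift {A B X Y : Fin (n + 1)} (i : A ⟶ B) (p : X ⟶ Y)
      (hi : ∀ u : Fin (n + 1), A ≤ u → u < B → f.1 u < B.1) (hp : Y.1 ≤ f.1 X) :
      HasLiftingProperty i p := by
    rw [hasLiftingProperty_iff_of_preorder]
    intro hAX hBY
    by_contra! hXB
    have := hi X hAX hXB
    have : B.1 ≤ Y.1 := hBY
    omega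
  have factor {X Y : Fin (n + 1)} (g : X ⟶ Y) : ∃ (Z : Fin (n + 1)) (_ : X ⟶ Z) (_ : Z ⟶ Y),
      (∀ u : Fin (n + 1), X ≤ u → u < Z → f.1 u < Z.1) ∧ Y.1 ≤ f.1 Z := by
    obtain ⟨Z, ⟨hXZ, hYZ⟩, hmin⟩ := WellFounded.has_min (wellFounded_lt (α := Fin (n + 1)))
      {Z | X ≤ Z ∧ Y.1 ≤ f.1 Z} ⟨Y, leOfHom g, le_apply Y⟩
    refine ⟨Z, homOfLE hXZ, homOfLE (not_lt.1 (hmin Y ⟨leOfHom g, le_apply Y⟩)), ?_, hYZ⟩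
    intro u hXu huZ
    by_contra! hZu
    exact hmin u ⟨hXu, hYZ.trans (apply_le huZ.le hZu)⟩ huZ
  { weq := ⊤
    fib := fun x y _ => y.1 ≤ f.1 x
    cof := fun x y _ => ∀ u : Fin (n + 1), x ≤ u → u < y → f.1 u < y.1
    weq_comp := inferInstance
    fib_comp := ⟨fun g _ hg hh => hh.trans (apply_le (leOfHom g) hg)⟩
    cof_comp := ⟨fun {_ y _} _ h hg hh u hu hu' => (lt_or_ge u y).elim
      (fun huy => (hg u hu huy).trans_le (leOfHom h)) (fun huy => hh u huy hu')⟩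
    weq_retract := stableUnderRetractsHom_of_partialOrder _
    fib_retract := stableUnderRetractsHom_of_partialOrder _
    cof_retract := stableUnderRetractsHom_of_partialOrder _
    weq_two_out_of_three := inferInstance
    lift_cof_trivFib := fun _ _ _ _ i p hi hp _ => lift i p hi hp
    lift_trivCof_fib := fun _ _ _ _ i p hi _ hp => lift i p hi hp
    factor_cof_trivFib := fun _ _ g =>
      let ⟨Z, i, p, hi, hp⟩ := factor g
      ⟨Z, i, p, hi, hp, trivial, Subsingleton.elim _ _⟩
    factor_trivCof_fib := fun _ _ g =>
      let ⟨Z, i, p, hi, hp⟩ := factor g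
      ⟨Z, i, p, hi, trivial, hp, Subsingleton.elim _ _⟩ }

namespace ModelStructure

section PartialOrder

variable {α : Type u} [PartialOrder α]

theorem fib_of_le_of_le (M : ModelStructure α) (hM : ∀ ⦃x y : α⦄ (f : x ⟶ y), M.weq f)
    {i j k : α} (p : i ⟶ j) (hp : M.fib p) (q : i ⟶ k) (hkj : k ≤ j) : M.fib q := by
  obtain ⟨z, c, r, hc, -, hr, -⟩ := M.factor_trivCof_fib q
  have h := (hasLiftingProperty_iff_of_preorder c p).1
    (M.lift_trivCof_fib c p hc (hM c) hp) le_rfl ((leOfHom r).trans hkj)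
  obtain rfl := le_antisymm h (leOfHom c)
  rwa [Subsingleton.elim q r]

theorem fib_of_endomorphism (M : ModelStructure α) {i : α} (p : i ⟶ i) : M.fib p := by
  obtain ⟨z, c, r, -, -, hr, -⟩ := M.factor_trivCof_fib p
  obtain rfl := le_antisymm (leOfHom r) (leOfHom c)
  rwa [Subsingleton.elim p r]

theorem cof_iff_of_contractible (M : ModelStructure α)
    (hM : ∀ ⦃x y : α⦄ (f : x ⟶ y), M.weq f) {a b : α} (i : a ⟶ b) :
    M.cof i ↔ ∀ ⦃x y : α⦄ (p : x ⟶ y), M.fib p → HasLiftingProperty i p := by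
  refine ⟨fun hi x y p hp => M.lift_trivCof_fib i p hi (hM i) hp, fun h => ?_⟩
  obtain ⟨z, c, r, hc, -, hr, -⟩ := M.factor_trivCof_fib i
  have hbz := (hasLiftingProperty_iff_of_preorder i r).1 (h r hr) (leOfHom c) le_rfl
  obtain rfl := le_antisymm hbz (leOfHom r)
  rwa [Subsingleton.elim i c]

theorem eq_of_contractible_of_fib_eq {M N : ModelStructure α}
    (hM : ∀ ⦃x y : α⦄ (f : x ⟶ y), M.weq f) (hN : ∀ ⦃x y : α⦄ (f : x ⟶ y), N.weq f)
    (h : M.fib = N.fib) : M = N := by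
  have hw : M.weq = N.weq := by
    ext x y f
    exact iff_of_true (hM f) (hN f)
  have hc : M.cof = N.cof := by
    ext x y f
    rw [M.cof_iff_of_contractible hM, N.cof_iff_of_contractible hN, h]
  cases M
  cases N
  cases hw
  cases hc
  cases h
  rfl

end PartialOrder

theorem exists_bracketing {n : ℕ} (M : ModelStructure (Fin (n + 1)))
    (hM : ∀ ⦃x y : Fin (n + 1)⦄ (f : x ⟶ y), M.weq f) :
    ∃ f : bracketing 0 (n + 1), ∀ ⦃x y : Fin (n + 1)⦄ (p : x ⟶ y), M.fib p ↔ y.1 ≤ f.1 x := by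
  have hmax (x : Fin (n + 1)) : ∃ m : Fin (n + 1), x ≤ m ∧
      ∀ ⦃y⦄ (p : x ⟶ y), M.fib p ↔ y ≤ m := by
    obtain ⟨m, ⟨q, hq⟩, hm⟩ := WellFounded.has_min (wellFounded_gt (α := Fin (n + 1)))
      {y | ∃ p : x ⟶ y, M.fib p} ⟨x, 𝟙 x, M.fib_of_endomorphism _⟩
    exact ⟨m, leOfHom q, fun y p =>
      ⟨fun hp => not_lt.1 (hm y ⟨p, hp⟩), M.fib_of_le_of_le hM q hq p⟩⟩
  choose m hxm hm using hmax
  refine ⟨⟨fun i => if h : i < n + 1 then m ⟨i, h⟩ else 0, fun i _ hi => ?_, fun i hi => ?_⟩,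
    fun x y p => ?_⟩
  · simp only [hi, dite_true]
    refine ⟨hxm ⟨i, hi⟩, (m ⟨i, hi⟩).2, fun j hij hj => ?_⟩
    have hjn : j < n + 1 := hj.trans_lt (m ⟨i, hi⟩).2
    rw [dif_pos hjn]
    let p : (⟨i, hi⟩ : Fin (n + 1)) ⟶ ⟨j, hjn⟩ := homOfLE hij
    let q : (⟨j, hjn⟩ : Fin (n + 1)) ⟶ m ⟨j, hjn⟩ := homOfLE (hxm _)
    exact (hm _ (p ≫ q)).1 (M.fib_comp.comp_mem p q ((hm _ p).2 hj) ((hm _ q).2 le_rfl))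
  · exact dif_neg (by omega)
  · simp only [x.2, dite_true]
    exact hm x p

end ModelStructure

/-- The number of contractible model structures on `[n]` (those in which every
morphism is a weak equivalence) is the Catalan number `catalan (n+1)`. -/
theorem card_contractible_model_structures (n : ℕ) :
    Nat.card {M : ModelStructure (Fin (n + 1)) //
        ∀ ⦃x y : Fin (n + 1)⦄ (f : x ⟶ y), M.weq f} =
      catalan (n + 1) := by
  rw [← (finite_and_card_bracketing (n + 1) 0).2, Nat.zero_add]
  refine (Nat.card_eq_of_bijective
    (fun f : bracketing 0 (n + 1) =>
      (⟨bracketing.modelStructure f, fun _ _ _ => trivial⟩ : {M : ModelStructure (Fin (n + 1)) //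
        ∀ ⦃x y : Fin (n + 1)⦄ (f : x ⟶ y), M.weq f})) ⟨fun f g hfg => ?_, ?_⟩).symm
  · have hfib {x y : Fin (n + 1)} (p : x ⟶ y) : y.1 ≤ f.1 x ↔ y.1 ≤ g.1 x :=
      iff_of_eq (congrArg (fun M => M.1.fib p) hfg)
    refine Subtype.ext (funext fun i => ?_)
    by_cases hi : i < n + 1
    · have hf := f.2.1 i (Nat.zero_le i) hi
      have hg := g.2.1 i (Nat.zero_le i) hi
      refine le_antisymm ?_ ?_
      · exact (hfib (x := ⟨i, hi⟩) (y := ⟨f.1 i, hf.2.1⟩) (homOfLE hf.1)).1 le_rfl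
      · exact (hfib (x := ⟨i, hi⟩) (y := ⟨g.1 i, hg.2.1⟩) (homOfLE hg.1)).2 le_rfl
    · rw [f.2.2 i (by omega), g.2.2 i (by omega)]
  · rintro ⟨M, hM⟩
    obtain ⟨f, hf⟩ := M.exists_bracketing hM
    refine ⟨f, Subtype.ext (ModelStructure.eq_of_contractible_of_fib_eq
      (fun _ _ _ => trivial) hM ?_)⟩
    ext x y p
    exact (hf p).symm
end
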